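/- For every p ∈ (1, 4/3) there exists a constant K_p ∈ (0,∞) such that for every n,d ∈ ℕ with 1 ≤ d ≤ n and every function f : {-1,1}^n → ℂ of degree at most d, Inf^{(p)} f ≤ K_p · d^{2 − (1/π)·arcsin(2√(p−1)/p)} · ‖f‖_{L_∞}^p. -/

import Mathlib

open scoped BigOperators ENNReal NNReal

noncomputable section

namespace HammingCube

variable {X : Type*} [NormedAddCommGroup X] [NormedSpace ℂ X]

/-- The sign ±1 associated to a boolean coordinate. -/
def sgn (b : Bool) : ℝ := if b then 1 else -1

/-- The Walsh function `w_A(ε) = ∏_{i ∈ A} ε_i`. -/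
def walsh {n : ℕ} (A : Finset (Fin n)) (ε : Fin n → Bool) : ℝ := ∏ i ∈ A, sgn (ε i)

/-- The Fourier–Walsh coefficient `f̂(A) = 2⁻ⁿ ∑_δ f(δ) w_A(δ)`. -/
def coeff {n : ℕ} (f : (Fin n → Bool) → X) (A : Finset (Fin n)) : X :=
  (2 ^ n : ℝ)⁻¹ • ∑ δ : Fin n → Bool, walsh A δ • f δ

/-- `f` has degree at most `d`: `f̂(A) = 0` whenever `|A| > d`. -/
def degLE {n : ℕ} (f : (Fin n → Bool) → X) (d : ℕ) : Prop :=
  ∀ A : Finset (Fin n), d < A.card → coeff f A = 0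

/-- `f` belongs to the `d`-th tail space: `f̂(A) = 0` whenever `|A| < d`. -/
def tailSpace {n : ℕ} (f : (Fin n → Bool) → X) (d : ℕ) : Prop :=
  ∀ A : Finset (Fin n), A.card < d → coeff f A = 0

/-- The heat semigroup `e^{-tΔ} f = ∑_A e^{-t|A|} f̂(A) w_A`. -/
def heat {n : ℕ} (t : ℝ) (f : (Fin n → Bool) → X) : (Fin n → Bool) → X :=
  fun ε => ∑ A : Finset (Fin n), Real.exp (-t * A.card) • walsh A ε • coeff f A

/-- The hypercube Laplacian `Δ f = ∑_A |A| f̂(A) w_A`. -/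
def lap {n : ℕ} (f : (Fin n → Bool) → X) : (Fin n → Bool) → X :=
  fun ε => ∑ A : Finset (Fin n), (A.card : ℝ) • walsh A ε • coeff f A

/-- The fractional Laplacian `Δ^γ f = ∑_A |A|^γ f̂(A) w_A`. -/
def fracLap {n : ℕ} (γ : ℝ) (f : (Fin n → Bool) → X) : (Fin n → Bool) → X :=
  fun ε => ∑ A : Finset (Fin n), ((A.card : ℝ) ^ γ) • walsh A ε • coeff f A

/-- The `i`-th discrete partial derivative. -/
def pderiv {n : ℕ} (i : Fin n) (f : (Fin n → Bool) → X) : (Fin n → Bool) → X :=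
  fun ε => (2 : ℝ)⁻¹ • (f ε - f (Function.update ε i (!(ε i))))

/-- The vector-valued `L_p` norm `(2⁻ⁿ ∑_ε ‖f(ε)‖^p)^{1/p}` for finite `p`. -/
def lpNorm {n : ℕ} {Y : Type*} [NormedAddCommGroup Y] (p : ℝ)
    (f : (Fin n → Bool) → Y) : ℝ :=
  ((2 ^ n : ℝ)⁻¹ * ∑ ε : Fin n → Bool, ‖f ε‖ ^ p) ^ (1 / p)

/-- The `L_∞` norm `max_ε ‖f(ε)‖`. -/
def linfNorm {n : ℕ} {Y : Type*} [NormedAddCommGroup Y]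
    (f : (Fin n → Bool) → Y) : ℝ :=
  ⨆ ε : Fin n → Bool, ‖f ε‖

/-- The `L_p` norm for `p ∈ [1,∞]` encoded as `p : ℝ≥0∞`. -/
def lpNormE {n : ℕ} {Y : Type*} [NormedAddCommGroup Y] (p : ℝ≥0∞)
    (f : (Fin n → Bool) → Y) : ℝ :=
  if p = ⊤ then linfNorm f else lpNorm p.toReal f

/-- The scalar `L_p` norm of the gradient `‖(∑_i |∂_i f|²)^{1/2}‖_{L_p}`. -/
def gradLpNorm {n : ℕ} (p : ℝ) (f : (Fin n → Bool) → ℂ) : ℝ :=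
  lpNorm p (fun ε => Real.sqrt (∑ i : Fin n, ‖pderiv i f ε‖ ^ 2))

/-- The Rademacher projection `Rad f(ε) = ∑_i f̂({i}) ε_i`. -/
def Rad {n : ℕ} (f : (Fin n → Bool) → X) : (Fin n → Bool) → X :=
  fun ε => ∑ i : Fin n, sgn (ε i) • coeff f {i}

/-- A complex Banach space is `K`-convex if the Rademacher projections are uniformly
bounded on `L_q` for some `q ∈ (1,∞)`. -/
def KConvex (X : Type*) [NormedAddCommGroup X] [NormedSpace ℂ X] : Prop :=
  ∃ q : ℝ, 1 < q ∧ ∃ M : ℝ, ∀ (n : ℕ) (f : (Fin n → Bool) → X),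
    lpNorm q (Rad f) ≤ M * lpNorm q f

/-- `X` has cotype `q` with constant `C`. -/
def HasCotype (X : Type*) [NormedAddCommGroup X] [NormedSpace ℂ X] (q C : ℝ) : Prop :=
  ∀ (n : ℕ) (x : Fin n → X),
    C⁻¹ * (∑ i : Fin n, ‖x i‖ ^ q) ^ (1 / q) ≤
      ((2 ^ n : ℝ)⁻¹ * ∑ ε : Fin n → Bool, ‖∑ i : Fin n, sgn (ε i) • x i‖ ^ q) ^ (1 / q)

/-- The entropy `Ent(h)` of a nonnegative function on the cube. -/
def entropy {n : ℕ} (h : (Fin n → Bool) → ℝ) : ℝ :=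
  (2 ^ n : ℝ)⁻¹ * ∑ ε : Fin n → Bool, h ε * Real.log (h ε) -
    ((2 ^ n : ℝ)⁻¹ * ∑ ε : Fin n → Bool, h ε) *
      Real.log ((2 ^ n : ℝ)⁻¹ * ∑ ε : Fin n → Bool, h ε)

/-- The `L_∞` norm of the gradient `max_ε (∑_i |∂_i f(ε)|²)^{1/2}`. -/
def gradLinfNorm {n : ℕ} (f : (Fin n → Bool) → ℂ) : ℝ :=
  ⨆ ε : Fin n → Bool, Real.sqrt (∑ i : Fin n, ‖pderiv i f ε‖ ^ 2)

/-!
Let `T_w` be the noise operator with complex parameter `w`. For `z` in the sector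
`|arg z| ≤ arccos ((2 - p) / p)` the form `(a, b) ↦ Re z ⟨J a - J b, a - b⟩` of the duality map `J`
of `L_p` is nonnegative; differentiating `t ↦ ‖T_{ρ/(1 + t z)} g‖_p` therefore gives
`‖T_{ρ/(1 + z)} g‖_p ≤ ‖T_ρ g‖_p`.

If `g` has degree at most `d`, then `Q(w) = ⟨J g, T_{ρ w} g⟩` is a polynomial of degree at most `d`
which is thus bounded on the lens formed by the points `1 / (1 + z)`. With
`α = 2 - (2 / π) arcsin (2 √(p - 1) / p)`, the map `ζ ↦ (1 - ζ^α)⁻¹` sends the imaginary axis into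
the lens and `1` to infinity, and the Phragmén–Lindelöf principle for
`Q((1 - ζ^α)⁻¹) ((ζ - 1) / (ζ + 1))^d` in the right half-plane, evaluated at `ζ = W = 1 / (2 d)`
with `ρ = 1 - W^α`, yields the reverse contraction `‖g‖_p ≤ e² ‖T_ρ g‖_p`.

Apply this to `g = ∂_i f`. By Bernstein's inequality on `[-1, 1]` for the multilinear extension of
`f` along lines, every partial sum of `i ↦ ∂_i T_ρ f` is at most
`e d ‖f‖_∞ / √(1 - ρ²) ≤ 2 e d^(1 + α/2) ‖f‖_∞`, while each single term is at most `‖f‖_∞`.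
-/

section PhragmenLindelof

open Complex Polynomial

lemma norm_eval_le_of_natDegree_le {𝕜 : Type*} [SeminormedRing 𝕜] [NormOneClass 𝕜]
    {q : Polynomial 𝕜} {d : ℕ} (hq : q.natDegree ≤ d) {z : 𝕜} {R : ℝ} (hR : 1 ≤ R)
    (hz : ‖z‖ ≤ R) :
    ‖q.eval z‖ ≤ (∑ k ∈ Finset.range (d + 1), ‖q.coeff k‖) * R ^ d := by
  rw [eval_eq_sum_range' (Nat.lt_succ_of_le hq), Finset.sum_mul]
  refine norm_sum_le_of_le _ fun k hk => (norm_mul_le _ _).trans ?_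
  gcongr
  calc ‖z ^ k‖ ≤ ‖z‖ ^ k := norm_pow_le z k
    _ ≤ R ^ k := by gcongr
    _ ≤ R ^ d := pow_le_pow_right₀ hR (Finset.mem_range_succ_iff.1 hk)

lemma norm_le_of_norm_le_on_imaginary_axis {E : Type*} [NormedAddCommGroup E] [NormedSpace ℂ E]
    {f : ℂ → E} {R B M : ℝ} (hf : DiffContOnCl ℂ f {z | 0 < z.re})
    (hB : ∀ z : ℂ, 0 ≤ z.re → R ≤ ‖z‖ → ‖f z‖ ≤ B) (hM : ∀ y : ℝ, ‖f (y * I)‖ ≤ M)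
    {z : ℂ} (hz : 0 ≤ z.re) : ‖f z‖ ≤ M := by
  refine PhragmenLindelof.right_half_plane_of_bounded_on_real hf ⟨1, one_lt_two, 0, ?_⟩
    ⟨B, ?_⟩ hM hz
  · refine .of_bound B (Filter.eventually_inf_principal.2 ?_)
    filter_upwards [tendsto_norm_cobounded_atTop.eventually_ge_atTop R] with w hRw hw
    simpa using hB w (le_of_lt hw) hRw
  · rw [Filter.eventually_map]
    filter_upwards [Filter.eventually_ge_atTop (max 0 R)] with x hx
    have hx0 : 0 ≤ x := (le_max_left 0 R).trans hx
    exact hB x hx0 (by simpa [abs_of_nonneg hx0] using (le_max_right 0 R).trans hx)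

end PhragmenLindelof

section Bernstein

open Complex

lemma norm_cosh_le (z : ℂ) : ‖cosh z‖ ≤ Real.exp |z.re| := by
  have hpos : ‖exp z‖ ≤ Real.exp |z.re| := by
    rw [norm_exp]
    exact Real.exp_le_exp.2 (le_abs_self _)
  have hneg : ‖exp (-z)‖ ≤ Real.exp |z.re| := by
    rw [norm_exp, neg_re]
    exact Real.exp_le_exp.2 (neg_le_abs _)
  calc ‖cosh z‖ = ‖exp z + exp (-z)‖ / 2 := by rw [cosh, norm_div, norm_ofNat]
    _ ≤ (‖exp z‖ + ‖exp (-z)‖) / 2 := by gcongr; exact norm_add_le _ _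
    _ ≤ Real.exp |z.re| := by linarith

variable {q : Polynomial ℂ} {d : ℕ} {M : ℝ}

lemma norm_eval_cosh_le_of_re_nonneg (hq : q.natDegree ≤ d)
    (hM : ∀ s : ℝ, |s| ≤ 1 → ‖q.eval (s : ℂ)‖ ≤ M) {z : ℂ} (hz : 0 ≤ z.re) :
    ‖q.eval (cosh z)‖ ≤ M * Real.exp (d * z.re) := by
  have norm_exp_neg (w : ℂ) : ‖exp (-(d * w))‖ = (Real.exp (d * w.re))⁻¹ := by
    rw [norm_exp, ← Real.exp_neg]
    simp
  have hdiff : Differentiable ℂ fun w : ℂ => q.eval (cosh w) * exp (-(d * w)) :=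
    (q.differentiable.comp differentiable_cosh).mul (by fun_prop)
  have key : ‖q.eval (cosh z) * exp (-(d * z))‖ ≤ M := by
    refine norm_le_of_norm_le_on_imaginary_axis (R := 0)
      (B := ∑ k ∈ Finset.range (d + 1), ‖q.coeff k‖) hdiff.diffContOnCl (fun w hw _ => ?_)
      (fun y => ?_) hz
    · rw [norm_mul, norm_exp_neg, ← div_eq_mul_inv, div_le_iff₀ (Real.exp_pos _),
        Real.exp_nat_mul, ← abs_of_nonneg hw]
      exact norm_eval_le_of_natDegree_le hq (Real.one_le_exp (abs_nonneg _)) (norm_cosh_le w)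
    · rw [norm_mul, norm_exp_neg, cosh_mul_I, ← ofReal_cos]
      simpa using hM _ (Real.abs_cos_le_one y)
  rwa [norm_mul, norm_exp_neg, ← div_eq_mul_inv, div_le_iff₀ (Real.exp_pos _)] at key

lemma norm_eval_cosh_le (hq : q.natDegree ≤ d)
    (hM : ∀ s : ℝ, |s| ≤ 1 → ‖q.eval (s : ℂ)‖ ≤ M) (z : ℂ) :
    ‖q.eval (cosh z)‖ ≤ M * Real.exp (d * |z.re|) := by
  rcases le_total 0 z.re with hz | hz
  · rw [abs_of_nonneg hz]
    exact norm_eval_cosh_le_of_re_nonneg hq hM hz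
  · rw [abs_of_nonpos hz, ← cosh_neg, ← neg_re]
    exact norm_eval_cosh_le_of_re_nonneg hq hM (by simpa using hz)

-- Cauchy's estimate for `z ↦ q (cosh z)` on the circle of radius `1 / d` about `i arccos x`.
lemma norm_eval_derivative_mul_sqrt_le (hq : q.natDegree ≤ d)
    (hM : ∀ s : ℝ, |s| ≤ 1 → ‖q.eval (s : ℂ)‖ ≤ M) {x : ℝ} (hx : |x| ≤ 1) :
    ‖q.derivative.eval (x : ℂ)‖ * √(1 - x ^ 2) ≤ Real.exp 1 * d * M := by
  rcases d.eq_zero_or_pos with rfl | hd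
  · simp [Polynomial.derivative_of_natDegree_zero (Nat.le_zero.1 hq)]
  have hd0 : (0 : ℝ) < d := by exact_mod_cast hd
  have hM0 : 0 ≤ M := (norm_nonneg _).trans (hM 0 (by simp))
  let c : ℂ := Real.arccos x * I
  have hcosh : cosh c = x := by
    rw [cosh_mul_I, ← ofReal_cos, Real.cos_arccos (abs_le.1 hx).1 (abs_le.1 hx).2]
  have hsinh : ‖sinh c‖ = √(1 - x ^ 2) := by
    rw [sinh_mul_I, ← ofReal_sin, Real.sin_arccos]
    simp [abs_of_nonneg (Real.sqrt_nonneg _)]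
  have hderiv : deriv (fun z => q.eval (cosh z)) c = q.derivative.eval (x : ℂ) * sinh c := by
    rw [← hcosh]
    exact ((q.hasDerivAt _).comp c (hasDerivAt_cosh c)).deriv
  have hsphere : ∀ z ∈ Metric.sphere c (1 / d), ‖q.eval (cosh z)‖ ≤ M * Real.exp 1 := by
    intro z hz
    have hre : |z.re| ≤ 1 / d := by
      rw [← mem_sphere_iff_norm.1 hz]
      simpa [c] using abs_re_le_norm (z - c)
    refine (norm_eval_cosh_le hq hM z).trans ?_
    gcongr
    rwa [le_div_iff₀' hd0] at hre
  have hcauchy := norm_deriv_le_of_forall_mem_sphere_norm_le (by positivity)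
    (q.differentiable.comp differentiable_cosh).diffContOnCl hsphere
  calc ‖q.derivative.eval (x : ℂ)‖ * √(1 - x ^ 2)
      = ‖deriv (fun z => q.eval (cosh z)) c‖ := by rw [hderiv, norm_mul, hsinh]
    _ ≤ M * Real.exp 1 / (1 / d) := hcauchy
    _ = Real.exp 1 * d * M := by field_simp

end Bernstein

section LensGrowth

open Complex

lemma cpow_ne_one_of_re_nonneg {α : ℝ} (hα : 0 < α) (hα4 : α < 4) {z : ℂ} (hz : 0 ≤ z.re)
    (hz1 : z ≠ 1) : z ^ (α : ℂ) ≠ 1 := by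
  intro h
  refine hz1 ?_
  have hnorm : ‖z‖ = 1 := by
    rw [← Real.rpow_left_inj (norm_nonneg z) zero_le_one hα.ne', ← norm_cpow_real, h, norm_one,
      Real.one_rpow]
  have hcos : Real.cos (z.arg * α) = 1 := by
    have := cpow_ofReal_re z α
    rwa [h, hnorm, Real.one_rpow, one_mul, one_re, eq_comm] at this
  have hlt : |z.arg * α| < 2 * Real.pi := by
    rw [abs_mul, abs_of_pos hα]
    calc |z.arg| * α ≤ Real.pi / 2 * α := by
          gcongr
          exact abs_arg_le_pi_div_two_iff.2 hz
      _ < Real.pi / 2 * 4 := by gcongr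
      _ = 2 * Real.pi := by ring
  have harg : z.arg = 0 := by
    obtain ⟨hlt₁, hlt₂⟩ := abs_lt.1 hlt
    exact (mul_eq_zero.1 ((Real.cos_eq_one_iff_of_lt_of_lt hlt₁ hlt₂).1 hcos)).resolve_right hα.ne'
  rw [← norm_mul_exp_arg_mul_I z, hnorm, harg]
  simp

lemma mul_I_cpow_re {α : ℝ} (hα : α ≠ 0) (y : ℝ) :
    ((y * I : ℂ) ^ (α : ℂ)).re = ‖(y * I : ℂ) ^ (α : ℂ)‖ * Real.cos (Real.pi * α / 2) := by
  rw [cpow_ofReal_re, norm_cpow_real]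
  rcases lt_trichotomy y 0 with hy | rfl | hy
  · have harg : (y * I : ℂ).arg = -(Real.pi / 2) := by
      rw [← neg_neg (y : ℂ), ← ofReal_neg, neg_mul_comm, arg_real_mul _ (by linarith), arg_neg_I]
    rw [harg, neg_mul, Real.cos_neg, div_mul_eq_mul_div]
  · simp [Real.zero_rpow hα]
  · rw [arg_real_mul _ hy, arg_I, div_mul_eq_mul_div]

lemma norm_sub_one_div_add_one_le {z : ℂ} (hz : 0 ≤ z.re) : ‖(z - 1) / (z + 1)‖ ≤ 1 := by
  rw [norm_div]
  refine div_le_one_of_le₀ ?_ (norm_nonneg _)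
  rw [← sq_le_sq₀ (norm_nonneg _) (norm_nonneg _), ← normSq_eq_norm_sq,
    ← normSq_eq_norm_sq, normSq_apply, normSq_apply]
  simp only [sub_re, sub_im, add_re, add_im, one_re, one_im]
  nlinarith

lemma diffContOnCl_cpow_const {c : ℂ} (hc : 0 < c.re) :
    DiffContOnCl ℂ (fun z => z ^ c) {z : ℂ | 0 < z.re} where
  differentiableOn z hz :=
    (differentiableAt_id.cpow_const (Or.inl hz)).differentiableWithinAt
  continuousOn z hz := by
    rw [closure_setOfPred_lt_re] at hz
    exact (continuousAt_cpow_const_of_re_pos (Or.inl hz) hc).continuousWithinAt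

lemma diffContOnCl_dslope {E : Type*} [NormedAddCommGroup E] [NormedSpace ℂ E] [CompleteSpace E]
    {f : ℂ → E} {s : Set ℂ} {c : ℂ} (hs : s ∈ nhds c) (hf : DiffContOnCl ℂ f s) :
    DiffContOnCl ℂ (dslope f c) s where
  differentiableOn := (differentiableOn_dslope hs).2 hf.differentiableOn
  continuousOn := (continuousOn_dslope (Filter.mem_of_superset hs subset_closure)).2
    ⟨hf.continuousOn, hf.differentiableOn.differentiableAt hs⟩

lemma dslope_cpow_one_ne_zero {α : ℝ} (hα : 0 < α) (hα4 : α < 4) {z : ℂ} (hz : 0 ≤ z.re) :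
    dslope (fun w : ℂ => w ^ (α : ℂ)) 1 z ≠ 0 := by
  rcases eq_or_ne z 1 with rfl | hz1
  · have : HasDerivAt (fun w : ℂ => w ^ (α : ℂ)) α 1 := by
      simpa using (hasDerivAt_id (1 : ℂ)).cpow_const (c := (α : ℂ)) (Or.inl (by simp))
    rw [dslope_same, this.deriv]
    exact_mod_cast hα.ne'
  · rw [dslope_of_ne _ hz1, slope_def_field, one_cpow]
    exact div_ne_zero (sub_ne_zero.2 (cpow_ne_one_of_re_nonneg hα hα4 hz hz1)) (sub_ne_zero.2 hz1)

-- The singularity at `z = 1` is removable.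
lemma exists_diffContOnCl_eq_div_one_sub_cpow {α : ℝ} (hα : 0 < α) (hα4 : α < 4) :
    ∃ h : ℂ → ℂ, DiffContOnCl ℂ h {z : ℂ | 0 < z.re} ∧
      ∀ z : ℂ, 0 ≤ z.re → z ≠ 1 → h z = (z - 1) / (z + 1) / (1 - z ^ (α : ℂ)) := by
  have add_one_ne_zero {z : ℂ} (hz : 0 ≤ z.re) : z + 1 ≠ 0 := fun h => by
    have := congrArg re h
    rw [add_re, one_re, zero_re] at this
    linarith
  have hdslope : DiffContOnCl ℂ (dslope (fun w : ℂ => w ^ (α : ℂ)) 1) {z : ℂ | 0 < z.re} :=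
    diffContOnCl_dslope ((isOpen_lt continuous_const continuous_re).mem_nhds (by simp))
      (diffContOnCl_cpow_const (by simpa using hα))
  have hadd : DiffContOnCl ℂ (fun z : ℂ => -(z + 1)) {z : ℂ | 0 < z.re} :=
    Differentiable.diffContOnCl (by fun_prop)
  refine ⟨fun z => (-(z + 1) • dslope (fun w : ℂ => w ^ (α : ℂ)) 1 z)⁻¹,
    (hadd.smul hdslope).inv fun z hz => ?_, fun z hz hz1 => ?_⟩
  · rw [closure_setOfPred_lt_re] at hz
    exact smul_ne_zero (neg_ne_zero.2 (add_one_ne_zero hz)) (dslope_cpow_one_ne_zero hα hα4 hz)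
  · have := add_one_ne_zero hz
    have := sub_ne_zero.2 hz1
    have := sub_ne_zero.2 (cpow_ne_one_of_re_nonneg hα hα4 hz hz1)
    have := sub_ne_zero.2 (cpow_ne_one_of_re_nonneg hα hα4 hz hz1).symm
    simp only [dslope_of_ne _ hz1, slope_def_field, one_cpow, smul_eq_mul]
    field_simp
    ring

lemma eval_inv_eq_eval_reflect_mul_pow {K : Type*} [Field K] {Q : Polynomial K} {d : ℕ}
    (hQ : Q.natDegree ≤ d) {v : K} (hv : v ≠ 0) :
    Q.eval v⁻¹ = (Q.reflect d).eval v * v⁻¹ ^ d := by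
  let : Invertible v⁻¹ := invertibleOfNonzero (inv_ne_zero hv)
  simpa only [invOf_eq_inv, inv_inv, Polynomial.eval₂_id] using
    (Polynomial.eval₂_reflect_mul_pow (RingHom.id K) v⁻¹ d Q hQ).symm

variable {Q : Polynomial ℂ} {d : ℕ}

lemma exists_diffContOnCl_eq_eval_mul_pow (hQ : Q.natDegree ≤ d) {α : ℝ} (hα : 0 < α)
    (hα4 : α < 4) :
    ∃ F : ℂ → ℂ, DiffContOnCl ℂ F {z : ℂ | 0 < z.re} ∧ ∀ z : ℂ, 0 ≤ z.re → z ≠ 1 →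
      F z = Q.eval (1 - z ^ (α : ℂ))⁻¹ * ((z - 1) / (z + 1)) ^ d := by
  obtain ⟨h, hh, h_eq⟩ := exists_diffContOnCl_eq_div_one_sub_cpow hα hα4
  have hcpow := diffContOnCl_cpow_const (c := α) (by simpa using hα)
  refine ⟨fun z => (Q.reflect d).eval (1 - z ^ (α : ℂ)) • h z ^ d,
    ((Q.reflect d).differentiable.comp_diffContOnCl (hcpow.const_sub 1)).smul
      ((differentiable_pow d).comp_diffContOnCl hh), fun z hz hz1 => ?_⟩
  have hv : 1 - z ^ (α : ℂ) ≠ 0 :=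
    sub_ne_zero.2 (cpow_ne_one_of_re_nonneg hα hα4 hz hz1).symm
  simp only [eval_inv_eq_eval_reflect_mul_pow hQ hv, smul_eq_mul, h_eq z hz hz1, div_pow, inv_pow]
  ring

lemma norm_eval_inv_one_sub_cpow_mul_pow_le (hQ : Q.natDegree ≤ d) {α : ℝ} (hα : 0 < α)
    (hα4 : α < 4) {M : ℝ} (hM : ∀ y : ℝ, ‖Q.eval (1 - (y * I : ℂ) ^ (α : ℂ))⁻¹‖ ≤ M)
    {z : ℂ} (hz : 0 ≤ z.re) (hz1 : z ≠ 1) :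
    ‖Q.eval (1 - z ^ (α : ℂ))⁻¹‖ * ‖(z - 1) / (z + 1)‖ ^ d ≤ M := by
  obtain ⟨F, hF, F_eq⟩ := exists_diffContOnCl_eq_eval_mul_pow hQ hα hα4
  have norm_F_le {w : ℂ} (hw : 0 ≤ w.re) (hw1 : w ≠ 1) :
      ‖F w‖ ≤ ‖Q.eval (1 - w ^ (α : ℂ))⁻¹‖ := by
    rw [F_eq w hw hw1, norm_mul, norm_pow]
    exact mul_le_of_le_one_right (norm_nonneg _)
      (pow_le_one₀ (norm_nonneg _) (norm_sub_one_div_add_one_le hw))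
  rw [← norm_pow, ← norm_mul, ← F_eq z hz hz1]
  refine norm_le_of_norm_le_on_imaginary_axis (R := 2 ^ α⁻¹)
    (B := ∑ k ∈ Finset.range (d + 1), ‖Q.coeff k‖) hF (fun w hw hRw => ?_) (fun y => ?_) hz
  · have hcpow : 2 ≤ ‖w ^ (α : ℂ)‖ := by
      rwa [norm_cpow_real, ← Real.rpow_inv_le_iff_of_pos two_pos.le (norm_nonneg w) hα]
    have hw1 : w ≠ 1 := by
      rintro rfl
      norm_num at hcpow
    have hinv : ‖(1 - w ^ (α : ℂ))⁻¹‖ ≤ 1 := by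
      rw [norm_inv, norm_sub_rev]
      refine inv_le_one_of_one_le₀ ?_
      have := norm_sub_norm_le (w ^ (α : ℂ)) 1
      rw [norm_one] at this
      linarith
    simpa using (norm_F_le hw hw1).trans (norm_eval_le_of_natDegree_le hQ le_rfl hinv)
  · refine (norm_F_le (by simp) fun h => ?_).trans (hM y)
    simpa using congrArg re h

end LensGrowth

section DualityMap

variable {p : ℝ}

lemma one_le_weighted_rpow_sub (hp1 : 1 ≤ p) (hp2 : p ≤ 2) {x : ℝ} (hx : 0 < x) :
    1 ≤ (2 - p) * x ^ (p - 1) + (p - 1) * x ^ (p - 2) := by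
  calc (1 : ℝ) = (x ^ (p - 1)) ^ (2 - p) * (x ^ (p - 2)) ^ (p - 1) := by
        rw [← Real.rpow_mul hx.le, ← Real.rpow_mul hx.le, ← Real.rpow_add hx]
        rw [show (p - 1) * (2 - p) + (p - 2) * (p - 1) = 0 by ring, Real.rpow_zero]
    _ ≤ (2 - p) * x ^ (p - 1) + (p - 1) * x ^ (p - 2) :=
      Real.geom_mean_le_arith_mean2_weighted (by linarith) (by linarith) (by positivity)
        (by positivity) (by ring)

lemma mul_sub_rpow_sub_one_le (hp1 : 1 ≤ p) (hp2 : p ≤ 2) {r : ℝ} (hr : 1 ≤ r) :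
    p * (r - r ^ (p - 1)) ≤ (2 - p) * (r ^ p - 1) := by
  have hderiv {x : ℝ} (hx : 0 < x) :
      HasDerivAt (fun x : ℝ => (2 - p) * (x ^ p - 1) - p * (x - x ^ (p - 1)))
        ((2 - p) * (p * x ^ (p - 1)) - p * (1 - (p - 1) * x ^ (p - 1 - 1))) x :=
    (((Real.hasDerivAt_rpow_const (Or.inl hx.ne')).sub_const 1).const_mul (2 - p)).sub
      (((hasDerivAt_id x).sub (Real.hasDerivAt_rpow_const (Or.inl hx.ne'))).const_mul p)
  have hmono : MonotoneOn (fun x : ℝ => (2 - p) * (x ^ p - 1) - p * (x - x ^ (p - 1)))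
      (Set.Ici 1) := by
    refine monotoneOn_of_hasDerivWithinAt_nonneg (convex_Ici 1)
      (fun x hx => (hderiv (one_pos.trans_le hx)).continuousAt.continuousWithinAt)
      (fun x hx => (hderiv ?_).hasDerivWithinAt) (fun x hx => ?_)
    all_goals
      rw [interior_Ici] at hx
      have hx0 : 0 < x := one_pos.trans hx
    · exact hx0
    · rw [show p - 1 - 1 = p - 2 by ring]
      linarith [mul_le_mul_of_nonneg_left (one_le_weighted_rpow_sub hp1 hp2 hx0)
        (by linarith : 0 ≤ p)]
  simpa using hmono Set.self_mem_Ici hr hr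

lemma mul_abs_mul_rpow_sub_le (hp1 : 1 < p) (hp2 : p ≤ 2) {a b : ℝ} (ha : 0 ≤ a) (hb : 0 ≤ b) :
    p * |a * b ^ (p - 1) - a ^ (p - 1) * b| ≤ (2 - p) * |a ^ p - b ^ p| := by
  wlog hba : b ≤ a generalizing a b
  · convert this hb ha (le_of_not_ge hba) using 2
    · rw [abs_sub_comm]
      ring_nf
    · rw [abs_sub_comm]
  rcases hb.eq_or_lt with rfl | hb
  · rw [Real.zero_rpow (by linarith)]
    simp only [mul_zero, sub_self, abs_zero]
    exact mul_nonneg (by linarith) (abs_nonneg _)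
  have hr : 1 ≤ a / b := (one_le_div hb).2 hba
  have hlhs : a * b ^ (p - 1) - a ^ (p - 1) * b = b ^ p * (a / b - (a / b) ^ (p - 1)) := by
    rw [Real.div_rpow ha hb.le, Real.rpow_sub hb, Real.rpow_one]
    field_simp
  have hrhs : a ^ p - b ^ p = b ^ p * ((a / b) ^ p - 1) := by
    rw [Real.div_rpow ha hb.le]
    field_simp
  have hlhs0 : (a / b) ^ (p - 1) ≤ a / b :=
    (Real.rpow_le_rpow_of_exponent_le hr (by linarith)).trans_eq (Real.rpow_one _)
  have hrhs0 : 1 ≤ (a / b) ^ p := Real.one_le_rpow hr (by linarith)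
  rw [hlhs, hrhs, abs_of_nonneg (mul_nonneg (by positivity) (sub_nonneg.2 hlhs0)),
    abs_of_nonneg (mul_nonneg (by positivity) (sub_nonneg.2 hrhs0)), mul_left_comm,
    mul_left_comm (2 - p)]
  exact mul_le_mul_of_nonneg_left (mul_sub_rpow_sub_one_le hp1.le hp2 hr) (by positivity)

/-- The duality map `x ↦ ‖x‖^(p-2) x` of `L_p`, that is, the gradient of `x ↦ ‖x‖^p / p` in an
inner product space. -/
def dualityMap {E : Type*} [NormedAddCommGroup E] [NormedSpace ℝ E] (p : ℝ) (x : E) : E :=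
  ‖x‖ ^ (p - 2) • x

lemma norm_dualityMap {E : Type*} [NormedAddCommGroup E] [NormedSpace ℝ E] (hp : p ≠ 1) (x : E) :
    ‖dualityMap p x‖ = ‖x‖ ^ (p - 1) := by
  rw [dualityMap, norm_smul, Real.norm_of_nonneg (by positivity),
    ← Real.rpow_add_one' (norm_nonneg x) fun h => hp (by linarith)]
  ring_nf

/-- The closed sector of half-angle `arccos ((2 - p) / p)` about the positive real axis:
multiplication by its elements keeps the duality map of `L_p` accretive. -/
def dualitySector (p : ℝ) : Set ℂ := {z | (2 - p) / p * ‖z‖ ≤ z.re}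

lemma re_nonneg_of_mem_dualitySector (hp1 : 1 < p) (hp2 : p ≤ 2) {z : ℂ}
    (hz : z ∈ dualitySector p) : 0 ≤ z.re :=
  (mul_nonneg (div_nonneg (by linarith) (by linarith)) (norm_nonneg z)).trans hz

lemma one_add_mul_ne_zero_of_mem_dualitySector (hp1 : 1 < p) (hp2 : p ≤ 2) {z : ℂ}
    (hz : z ∈ dualitySector p) {t : ℝ} (ht : 0 ≤ t) : 1 + t * z ≠ 0 := fun h => by
  have hre := congrArg Complex.re h
  simp only [Complex.add_re, Complex.one_re, Complex.re_ofReal_mul, Complex.zero_re] at hre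
  linarith [mul_nonneg ht (re_nonneg_of_mem_dualitySector hp1 hp2 hz)]

lemma mul_inv_one_add_mul_mem_dualitySector (hp1 : 1 < p) (hp2 : p ≤ 2) {z : ℂ}
    (hz : z ∈ dualitySector p) {t : ℝ} (ht : 0 ≤ t) : z * (1 + t * z)⁻¹ ∈ dualitySector p := by
  have hne := one_add_mul_ne_zero_of_mem_dualitySector hp1 hp2 hz ht
  have hre : (z * (1 + t * z)⁻¹).re = (z.re + t * ‖z‖ ^ 2) / ‖1 + t * z‖ ^ 2 := by
    rw [← Complex.normSq_eq_norm_sq, ← Complex.normSq_eq_norm_sq, ← div_eq_mul_inv, Complex.div_re,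
      Complex.normSq_apply z, ← add_div]
    simp
    ring
  have hc : (2 - p) / p ≤ 1 := by
    rw [div_le_one (by linarith)]
    linarith
  have hnorm : ‖1 + t * z‖ ≤ 1 + t * ‖z‖ := by
    simpa [abs_of_nonneg ht] using norm_add_le 1 (t * z)
  change (2 - p) / p * ‖z * (1 + t * z)⁻¹‖ ≤ _
  rw [hre, norm_mul, norm_inv, le_div_iff₀ (pow_pos (norm_pos_iff.2 hne) 2)]
  calc (2 - p) / p * (‖z‖ * ‖1 + t * z‖⁻¹) * ‖1 + t * z‖ ^ 2
      = (2 - p) / p * ‖z‖ * ‖1 + t * z‖ := by field_simp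
    _ ≤ (2 - p) / p * ‖z‖ * (1 + t * ‖z‖) := by gcongr
    _ = (2 - p) / p * ‖z‖ + (2 - p) / p * (t * ‖z‖ ^ 2) := by ring
    _ ≤ z.re + t * ‖z‖ ^ 2 := add_le_add hz (mul_le_of_le_one_left (by positivity) hc)

variable {H : Type*} [NormedAddCommGroup H] [InnerProductSpace ℂ H]

open scoped InnerProductSpace

lemma inner_dualityMap_left (x y : H) :
    ⟪dualityMap p x, y⟫_ℂ = (‖x‖ ^ (p - 2) : ℝ) * ⟪x, y⟫_ℂ := by
  rw [dualityMap, RCLike.real_smul_eq_coe_smul (K := ℂ), inner_smul_left]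
  simp

lemma inner_dualityMap_self (hp : p ≠ 0) (x : H) : ⟪dualityMap p x, x⟫_ℂ = (‖x‖ ^ p : ℝ) := by
  have hpow : ‖x‖ ^ p = ‖x‖ ^ (p - 2) * ‖x‖ ^ 2 := by
    rw [← Real.rpow_add_natCast' (norm_nonneg x) (by simpa using hp)]
    simp
  rw [inner_dualityMap_left, inner_self_eq_norm_sq_to_K, hpow]
  push_cast
  rfl

lemma re_mul_inner_smul_sub_smul_nonneg {z : ℂ} (hz : 0 ≤ z.re) {a b : H} {u v : ℝ} (hu : 0 ≤ u)
    (hv : 0 ≤ v)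
    (h : ‖z‖ * |‖a‖ * ‖b‖ * (u - v)| ≤ z.re * |u * ‖a‖ ^ 2 - v * ‖b‖ ^ 2|) :
    0 ≤ (z * ⟪u • a - v • b, a - b⟫_ℂ).re := by
  let C := (⟪a, b⟫_ℂ).re
  let S := (⟪a, b⟫_ℂ).im
  have hCS : C ^ 2 + S ^ 2 ≤ (‖a‖ * ‖b‖) ^ 2 := by
    calc C ^ 2 + S ^ 2 = ‖⟪a, b⟫_ℂ‖ ^ 2 := by
          rw [← Complex.normSq_eq_norm_sq, Complex.normSq_apply]
          ring
      _ ≤ (‖a‖ * ‖b‖) ^ 2 := by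
          gcongr
          exact norm_inner_le_norm a b
  have hexpand : (z * ⟪u • a - v • b, a - b⟫_ℂ).re =
      z.re * (u * ‖a‖ ^ 2 + v * ‖b‖ ^ 2) - (z.re * (u + v) * C - z.im * (u - v) * S) := by
    have hre : (⟪b, a⟫_ℂ).re = C := inner_re_symm (𝕜 := ℂ) b a
    have him : (⟪b, a⟫_ℂ).im = -S := inner_im_symm (𝕜 := ℂ) b a
    simp only [RCLike.real_smul_eq_coe_smul (K := ℂ), inner_sub_left, inner_sub_right,
      inner_smul_left, inner_self_eq_norm_sq_to_K]
    simp [hre, him, C, S, ← Complex.ofReal_pow]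
    ring
  have hsq : (z.re * (u + v) * C - z.im * (u - v) * S) ^ 2 ≤
      (z.re * (u * ‖a‖ ^ 2 + v * ‖b‖ ^ 2)) ^ 2 := by
    calc (z.re * (u + v) * C - z.im * (u - v) * S) ^ 2
        ≤ ((z.re * (u + v)) ^ 2 + (z.im * (u - v)) ^ 2) * (C ^ 2 + S ^ 2) := by
          linarith [sq_nonneg (z.re * (u + v) * S + z.im * (u - v) * C)]
      _ ≤ ((z.re * (u + v)) ^ 2 + (z.im * (u - v)) ^ 2) * (‖a‖ * ‖b‖) ^ 2 := by gcongr
      _ = 4 * z.re ^ 2 * u * v * (‖a‖ * ‖b‖) ^ 2 + (‖z‖ * |‖a‖ * ‖b‖ * (u - v)|) ^ 2 := by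
          rw [mul_pow ‖z‖, sq_abs, ← Complex.normSq_eq_norm_sq, Complex.normSq_apply]
          ring
      _ ≤ 4 * z.re ^ 2 * u * v * (‖a‖ * ‖b‖) ^ 2 +
            (z.re * |u * ‖a‖ ^ 2 - v * ‖b‖ ^ 2|) ^ 2 := by gcongr
      _ = (z.re * (u * ‖a‖ ^ 2 + v * ‖b‖ ^ 2)) ^ 2 := by
          rw [mul_pow z.re, sq_abs]
          ring
  rw [hexpand, sub_nonneg]
  exact (le_abs_self _).trans (abs_le_of_sq_le_sq hsq (by positivity))

lemma re_mul_inner_dualityMap_sub_nonneg (hp1 : 1 < p) (hp2 : p ≤ 2) {z : ℂ}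
    (hz : z ∈ dualitySector p) (a b : H) :
    0 ≤ (z * ⟪dualityMap p a - dualityMap p b, a - b⟫_ℂ).re := by
  have rpow_eq {r : ℝ} (hr : 0 ≤ r) :
      r ^ (p - 1) = r ^ (p - 2) * r ∧ r ^ p = r ^ (p - 2) * r ^ 2 := by
    constructor
    · rw [← Real.rpow_add_one' hr (by linarith)]
      ring_nf
    · rw [← Real.rpow_add_natCast' hr (by push_cast; linarith)]
      simp
  obtain ⟨ha₁, ha₂⟩ := rpow_eq (norm_nonneg a)
  obtain ⟨hb₁, hb₂⟩ := rpow_eq (norm_nonneg b)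
  have hscalar := mul_abs_mul_rpow_sub_le hp1 hp2 (norm_nonneg a) (norm_nonneg b)
  rw [ha₁, ha₂, hb₁, hb₂, abs_sub_comm, ← le_div_iff₀' (by linarith), mul_div_right_comm] at hscalar
  refine re_mul_inner_smul_sub_smul_nonneg (re_nonneg_of_mem_dualitySector hp1 hp2 hz)
    (by positivity) (by positivity) ?_
  calc ‖z‖ * |‖a‖ * ‖b‖ * (‖a‖ ^ (p - 2) - ‖b‖ ^ (p - 2))|
      ≤ ‖z‖ * ((2 - p) / p * |‖a‖ ^ (p - 2) * ‖a‖ ^ 2 - ‖b‖ ^ (p - 2) * ‖b‖ ^ 2|) := by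
        gcongr
        convert hscalar using 2
        ring
    _ = (2 - p) / p * ‖z‖ * |‖a‖ ^ (p - 2) * ‖a‖ ^ 2 - ‖b‖ ^ (p - 2) * ‖b‖ ^ 2| := by ring
    _ ≤ z.re * |‖a‖ ^ (p - 2) * ‖a‖ ^ 2 - ‖b‖ ^ (p - 2) * ‖b‖ ^ 2| := by
        gcongr
        exact hz

end DualityMap

section Cube

variable {n : ℕ}

lemma sgn_not (b : Bool) : sgn (!b) = -sgn b := by cases b <;> simp [sgn]

lemma abs_sgn (b : Bool) : |sgn b| = 1 := by cases b <;> simp [sgn]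

/-- The neighbour of `ε` in direction `i`, obtained by changing the sign of `ε i`. -/
def flipCoord (i : Fin n) (ε : Fin n → Bool) : Fin n → Bool := Function.update ε i (!(ε i))

lemma flipCoord_involutive (i : Fin n) : Function.Involutive (flipCoord i) := fun ε => by
  simp [flipCoord]

lemma sum_comp_flipCoord {Y : Type*} [AddCommMonoid Y] (i : Fin n) (h : (Fin n → Bool) → Y) :
    ∑ ε, h (flipCoord i ε) = ∑ ε, h ε :=
  Equiv.sum_comp (flipCoord_involutive i).toPerm h

lemma walsh_flipCoord (A : Finset (Fin n)) (i : Fin n) (ε : Fin n → Bool) :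
    walsh A (flipCoord i ε) = if i ∈ A then -walsh A ε else walsh A ε := by
  have off_diag {j : Fin n} (hj : j ≠ i) : sgn (flipCoord i ε j) = sgn (ε j) := by
    simp [flipCoord, hj]
  unfold walsh
  split_ifs with hi
  · rw [← Finset.mul_prod_erase A _ hi, ← Finset.mul_prod_erase A (fun j => sgn (ε j)) hi,
      ← neg_mul, ← sgn_not]
    congr 1
    · simp [flipCoord]
    · exact Finset.prod_congr rfl fun j hj => off_diag (Finset.ne_of_mem_erase hj)
  · exact Finset.prod_congr rfl fun j hj => off_diag (ne_of_mem_of_not_mem hj hi)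

lemma pderiv_flipCoord (i : Fin n) (f : (Fin n → Bool) → X) (ε : Fin n → Bool) :
    pderiv i f (flipCoord i ε) = -pderiv i f ε := by
  change (2 : ℝ)⁻¹ • (f (flipCoord i ε) - f (flipCoord i (flipCoord i ε))) =
    -((2 : ℝ)⁻¹ • (f ε - f (flipCoord i ε)))
  rw [flipCoord_involutive i ε, ← smul_neg, neg_sub]

lemma coeff_pderiv (i : Fin n) (f : (Fin n → Bool) → X) (A : Finset (Fin n)) :
    coeff (pderiv i f) A = if i ∈ A then coeff f A else 0 := by
  have hsum : ∑ δ, walsh A δ • pderiv i f δ =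
      (2 : ℝ)⁻¹ • ∑ δ, (walsh A δ - walsh A (flipCoord i δ)) • f δ := by
    have := sum_comp_flipCoord i fun δ => walsh A (flipCoord i δ) • f δ
    simp only [flipCoord_involutive i _] at this
    simp only [sub_smul, Finset.sum_sub_distrib, ← this]
    rw [← Finset.sum_sub_distrib, Finset.smul_sum]
    refine Finset.sum_congr rfl fun δ _ => ?_
    rw [← smul_sub, smul_comm]
    rfl
  unfold coeff
  rw [hsum]
  split_ifs with hi
  · simp only [walsh_flipCoord, if_pos hi, sub_neg_eq_add, ← two_mul, mul_smul,
      ← Finset.smul_sum, inv_smul_smul₀ (two_ne_zero' ℝ)]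
  · simp [walsh_flipCoord, hi]

lemma degLE_pderiv {d : ℕ} {f : (Fin n → Bool) → X} (hf : degLE f d) (i : Fin n) :
    degLE (pderiv i f) d := fun A hA => by
  rw [coeff_pderiv, hf A hA, ite_self]

/-- The noise operator `T_w f = ∑_A w^|A| f̂(A) w_A` with complex parameter `w`. -/
def noise (w : ℂ) (f : (Fin n → Bool) → X) : (Fin n → Bool) → X :=
  fun ε => ∑ A : Finset (Fin n), w ^ A.card • walsh A ε • coeff f A

lemma pderiv_noise (i : Fin n) (w : ℂ) (f : (Fin n → Bool) → X) (ε : Fin n → Bool) :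
    pderiv i (noise w f) ε =
      ∑ A : Finset (Fin n) with i ∈ A, w ^ A.card • walsh A ε • coeff f A := by
  change (2 : ℝ)⁻¹ • (noise w f ε - noise w f (flipCoord i ε)) = _
  rw [noise, noise, ← Finset.sum_sub_distrib, Finset.smul_sum, Finset.sum_filter]
  refine Finset.sum_congr rfl fun A _ => ?_
  rw [walsh_flipCoord]
  split_ifs
  · rw [neg_smul, smul_neg, sub_neg_eq_add, ← two_smul ℝ, inv_smul_smul₀ two_ne_zero]
  · rw [sub_self, smul_zero]

lemma noise_pderiv (i : Fin n) (w : ℂ) (f : (Fin n → Bool) → X) :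
    noise w (pderiv i f) = pderiv i (noise w f) := by
  ext ε
  rw [pderiv_noise, noise, Finset.sum_filter]
  refine Finset.sum_congr rfl fun A _ => ?_
  rw [coeff_pderiv]
  split_ifs <;> simp

lemma sum_pderiv_noise (S : Finset (Fin n)) (w : ℂ) (f : (Fin n → Bool) → X)
    (ε : Fin n → Bool) :
    ∑ i ∈ S, pderiv i (noise w f) ε =
      ∑ A : Finset (Fin n), (A ∩ S).card • w ^ A.card • walsh A ε • coeff f A := by
  simp only [pderiv_noise, Finset.sum_filter]
  rw [Finset.sum_comm]
  refine Finset.sum_congr rfl fun A _ => ?_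
  rw [← Finset.sum_filter, Finset.sum_const, Finset.filter_mem_eq_inter, Finset.inter_comm]

/-- The multilinear extension of a function on the cube to `ℝ^n`. -/
def multilinearExt (f : (Fin n → Bool) → X) (y : Fin n → ℝ) : X :=
  ∑ B : Finset (Fin n), (∏ i ∈ B, y i) • coeff f B

lemma noise_ofReal (ρ : ℝ) (f : (Fin n → Bool) → X) (ε : Fin n → Bool) :
    noise (ρ : ℂ) f ε = multilinearExt f fun i => ρ * sgn (ε i) := by
  refine Finset.sum_congr rfl fun A _ => ?_
  rw [Finset.prod_mul_distrib, Finset.prod_const, mul_smul, ← Complex.ofReal_pow, Complex.coe_smul]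
  rfl

lemma multilinearExt_eq_sum (f : (Fin n → Bool) → X) (y : Fin n → ℝ) :
    multilinearExt f y =
      (2 ^ n : ℝ)⁻¹ • ∑ δ : Fin n → Bool, (∏ i, (1 + y i * sgn (δ i))) • f δ := by
  simp only [multilinearExt, coeff, Finset.prod_one_add, Finset.powerset_univ, Finset.smul_sum,
    Finset.sum_smul, Finset.prod_mul_distrib, walsh, smul_smul]
  rw [Finset.sum_comm]
  exact Finset.sum_congr rfl fun δ _ => Finset.sum_congr rfl fun B _ => by ring_nf

lemma sum_prod_one_add_mul_sgn (y : Fin n → ℝ) :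
    ∑ δ : Fin n → Bool, ∏ i, (1 + y i * sgn (δ i)) = 2 ^ n := by
  have hcoord (i : Fin n) : ∑ b : Bool, (1 + y i * sgn b) = 2 := by
    simp [sgn]
    ring
  rw [← Fintype.prod_sum fun i b => 1 + y i * sgn b]
  simp only [hcoord, Finset.prod_const, Finset.card_univ, Fintype.card_fin]

lemma noise_one (f : (Fin n → Bool) → X) : noise 1 f = f := by
  ext ε
  have hdiag : ∏ i, (1 + sgn (ε i) * sgn (ε i)) = (2 : ℝ) ^ n := by
    have hsq (i : Fin n) : 1 + sgn (ε i) * sgn (ε i) = 2 := by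
      rw [← abs_mul_abs_self, abs_sgn]
      norm_num
    simp [hsq]
  have hoff {δ : Fin n → Bool} (hδ : δ ≠ ε) : ∏ i, (1 + sgn (ε i) * sgn (δ i)) = 0 := by
    obtain ⟨i, hi⟩ := Function.ne_iff.1 hδ
    refine Finset.prod_eq_zero (Finset.mem_univ i) ?_
    rw [Bool.eq_not.2 hi, sgn_not, mul_neg, ← abs_mul_abs_self, abs_sgn]
    norm_num
  rw [← Complex.ofReal_one, noise_ofReal, multilinearExt_eq_sum]
  simp only [one_mul]
  rw [Finset.sum_eq_single ε (fun δ _ hδ => by rw [hoff hδ, zero_smul]) (by simp), hdiag,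
    inv_smul_smul₀ (by positivity)]

section Norm

variable {Y : Type*} [NormedAddCommGroup Y]

lemma norm_le_linfNorm (f : (Fin n → Bool) → Y) (ε : Fin n → Bool) : ‖f ε‖ ≤ linfNorm f :=
  le_ciSup (f := fun ε => ‖f ε‖) (Set.finite_range _).bddAbove ε

lemma linfNorm_nonneg (f : (Fin n → Bool) → Y) : 0 ≤ linfNorm f :=
  Real.iSup_nonneg fun _ => norm_nonneg _

lemma lpNorm_nonneg (p : ℝ) (f : (Fin n → Bool) → Y) : 0 ≤ lpNorm p f := by
  unfold lpNorm
  positivity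

lemma lpNorm_rpow {p : ℝ} (hp : p ≠ 0) (f : (Fin n → Bool) → Y) :
    lpNorm p f ^ p = (2 ^ n : ℝ)⁻¹ * ∑ ε, ‖f ε‖ ^ p := by
  rw [lpNorm, one_div, Real.rpow_inv_rpow (by positivity) hp]

end Norm

lemma norm_multilinearExt_le (f : (Fin n → Bool) → X) {y : Fin n → ℝ} (hy : ∀ i, |y i| ≤ 1) :
    ‖multilinearExt f y‖ ≤ linfNorm f := by
  have hweight (δ : Fin n → Bool) : 0 ≤ ∏ i, (1 + y i * sgn (δ i)) := by
    refine Finset.prod_nonneg fun i _ => ?_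
    have : |y i * sgn (δ i)| ≤ 1 := by simpa [abs_mul, abs_sgn] using hy i
    linarith [(abs_le.1 this).1]
  rw [multilinearExt_eq_sum, norm_smul, Real.norm_of_nonneg (by positivity),
    inv_mul_le_iff₀ (by positivity), ← sum_prod_one_add_mul_sgn y, Finset.sum_mul]
  refine norm_sum_le_of_le _ fun δ _ => ?_
  rw [norm_smul, Real.norm_of_nonneg (hweight δ)]
  exact mul_le_mul_of_nonneg_left (norm_le_linfNorm f δ) (hweight δ)

end Cube

section Contraction

variable {n : ℕ} {H : Type*} [NormedAddCommGroup H] [InnerProductSpace ℂ H] {p : ℝ}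

open scoped InnerProductSpace

lemma sum_inner_pderiv (i : Fin n) (u v : (Fin n → Bool) → H) :
    ∑ ε, ⟪v ε, pderiv i u ε⟫_ℂ = ∑ ε, ⟪pderiv i v ε, pderiv i u ε⟫_ℂ := by
  have hflip : ∑ ε, ⟪v (flipCoord i ε), pderiv i u ε⟫_ℂ = -∑ ε, ⟪v ε, pderiv i u ε⟫_ℂ := by
    rw [← sum_comp_flipCoord i, ← Finset.sum_neg_distrib]
    simp only [flipCoord_involutive i _, pderiv_flipCoord, inner_neg_right]
  have hinner (ε : Fin n → Bool) : ⟪pderiv i v ε, pderiv i u ε⟫_ℂ =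
      (2 : ℂ)⁻¹ * (⟪v ε, pderiv i u ε⟫_ℂ - ⟪v (flipCoord i ε), pderiv i u ε⟫_ℂ) := by
    rw [← inner_sub_left, pderiv, RCLike.real_smul_eq_coe_smul (K := ℂ), inner_smul_left,
      RCLike.conj_ofReal]
    simp [flipCoord]
  simp only [hinner]
  rw [← Finset.mul_sum, Finset.sum_sub_distrib, hflip]
  ring

lemma re_mul_sum_inner_dualityMap_pderiv_nonneg (hp1 : 1 < p) (hp2 : p ≤ 2) {z : ℂ}
    (hz : z ∈ dualitySector p) (i : Fin n) (u : (Fin n → Bool) → H) :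
    0 ≤ (z * ∑ ε, ⟪dualityMap p (u ε), pderiv i u ε⟫_ℂ).re := by
  have hinner (ε : Fin n → Bool) :
      ⟪pderiv i (fun ε => dualityMap p (u ε)) ε, pderiv i u ε⟫_ℂ = (4⁻¹ : ℝ) *
        ⟪dualityMap p (u ε) - dualityMap p (u (flipCoord i ε)), u ε - u (flipCoord i ε)⟫_ℂ := by
    rw [pderiv, pderiv, RCLike.real_smul_eq_coe_smul (K := ℂ),
      RCLike.real_smul_eq_coe_smul (K := ℂ), inner_smul_left, inner_smul_right,
      RCLike.conj_ofReal, ← mul_assoc]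
    congr 1
    norm_num
  rw [sum_inner_pderiv i u fun ε => dualityMap p (u ε), Finset.mul_sum, Complex.re_sum]
  refine Finset.sum_nonneg fun ε _ => ?_
  rw [hinner, mul_left_comm, Complex.re_ofReal_mul]
  exact mul_nonneg (by norm_num) (re_mul_inner_dualityMap_sub_nonneg hp1 hp2 hz _ _)

lemma hasDerivAt_noise {w : ℝ → ℂ} {c : ℂ} {t : ℝ} (hw : HasDerivAt w (c * w t) t)
    (f : (Fin n → Bool) → X) (ε : Fin n → Bool) :
    HasDerivAt (fun t => noise (w t) f ε) (c • ∑ i, pderiv i (noise (w t) f) ε) t := by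
  have hterm (A : Finset (Fin n)) : HasDerivAt (fun t => w t ^ A.card • walsh A ε • coeff f A)
      (c • (A ∩ Finset.univ).card • w t ^ A.card • walsh A ε • coeff f A) t := by
    convert (hw.fun_pow A.card).smul_const (walsh A ε • coeff f A) using 1
    rw [Finset.inter_univ, ← Nat.cast_smul_eq_nsmul ℂ, smul_smul, smul_smul]
    congr 1
    rcases A.card with _ | k
    · simp
    · rw [Nat.add_sub_cancel]
      ring
  rw [sum_pderiv_noise, Finset.smul_sum]
  exact HasDerivAt.fun_sum fun A _ => hterm A

lemma hasDerivAt_mul_inv_one_add_mul (ρ : ℂ) {z : ℂ} {t : ℝ} (hz : 1 + t * z ≠ 0) :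
    HasDerivAt (fun t : ℝ => ρ * (1 + t * z)⁻¹) (-(z * (1 + t * z)⁻¹) * (ρ * (1 + t * z)⁻¹)) t := by
  have hlin : HasDerivAt (fun t : ℝ => 1 + t * z) z t := by
    simpa using (Complex.ofRealCLM.hasDerivAt.mul_const z).const_add 1
  refine ((hlin.fun_inv hz).const_mul ρ).congr_deriv ?_
  field_simp

lemma hasDerivAt_sum_norm_noise_rpow (hp : 1 < p) {w : ℝ → ℂ} {c : ℂ} {t : ℝ}
    (hw : HasDerivAt w (c * w t) t) (f : (Fin n → Bool) → H) :
    HasDerivAt (fun t => ∑ ε, ‖noise (w t) f ε‖ ^ p)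
      (p * ∑ i, (c * ∑ ε, ⟪dualityMap p (noise (w t) f ε), pderiv i (noise (w t) f) ε⟫_ℂ).re)
      t := by
  let _ : InnerProductSpace ℝ H := InnerProductSpace.complexToReal
  have hterm (ε : Fin n → Bool) := (hasFDerivAt_norm_rpow (noise (w t) f ε) hp).comp_hasDerivAt t
    (hasDerivAt_noise hw f ε)
  refine (HasDerivAt.fun_sum fun ε _ => hterm ε).congr_deriv ?_
  simp only [Finset.mul_sum, Complex.re_sum]
  rw [Finset.sum_comm]
  refine Finset.sum_congr rfl fun ε _ => ?_
  change p * ‖noise (w t) f ε‖ ^ (p - 2) *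
    (⟪noise (w t) f ε, c • ∑ i, pderiv i (noise (w t) f) ε⟫_ℂ).re = _
  simp only [inner_smul_right, inner_sum, inner_dualityMap_left, Finset.mul_sum, Complex.re_sum]
  refine Finset.sum_congr rfl fun i _ => ?_
  rw [mul_left_comm c, Complex.re_ofReal_mul, mul_assoc]

lemma lpNorm_noise_mul_inv_le (hp1 : 1 < p) (hp2 : p ≤ 2) {z : ℂ} (hz : z ∈ dualitySector p)
    (ρ : ℂ) (f : (Fin n → Bool) → H) :
    lpNorm p (noise (ρ * (1 + z)⁻¹) f) ≤ lpNorm p (noise ρ f) := by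
  have hderiv {t : ℝ} (ht : 0 ≤ t) := hasDerivAt_sum_norm_noise_rpow hp1
    (hasDerivAt_mul_inv_one_add_mul ρ (one_add_mul_ne_zero_of_mem_dualitySector hp1 hp2 hz ht)) f
  have hanti : AntitoneOn (fun t : ℝ => ∑ ε, ‖noise (ρ * (1 + t * z)⁻¹) f ε‖ ^ p) (Set.Ici 0) := by
    refine antitoneOn_of_hasDerivWithinAt_nonpos (convex_Ici 0)
      (fun t ht => (hderiv ht).continuousAt.continuousWithinAt)
      (fun t ht => (hderiv (interior_subset ht)).hasDerivWithinAt) fun t ht => ?_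
    refine mul_nonpos_of_nonneg_of_nonpos (by linarith) (Finset.sum_nonpos fun i _ => ?_)
    rw [neg_mul, Complex.neg_re, neg_nonpos]
    exact re_mul_sum_inner_dualityMap_pderiv_nonneg hp1 hp2
      (mul_inv_one_add_mul_mem_dualitySector hp1 hp2 hz (interior_subset ht)) i _
  have hle := hanti Set.self_mem_Ici (Set.mem_Ici.2 zero_le_one) zero_le_one
  simp only [Complex.ofReal_one, one_mul, Complex.ofReal_zero, zero_mul, add_zero, inv_one,
    mul_one] at hle
  unfold lpNorm
  gcongr

end Contraction

section ReverseContraction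

variable {n : ℕ} {H : Type*} [NormedAddCommGroup H] [InnerProductSpace ℂ H] {p : ℝ}

open scoped InnerProductSpace

lemma sum_inner_dualityMap_self (hp : p ≠ 0) (g : (Fin n → Bool) → H) :
    ∑ ε, ⟪dualityMap p (g ε), g ε⟫_ℂ = (2 ^ n * lpNorm p g ^ p : ℝ) := by
  simp only [inner_dualityMap_self hp]
  rw [← Complex.ofReal_sum, lpNorm_rpow hp, mul_inv_cancel_left₀ (by positivity)]

lemma norm_sum_inner_dualityMap_le (hp : 1 < p) (g u : (Fin n → Bool) → H) :
    (2 ^ n : ℝ)⁻¹ * ‖∑ ε, ⟪dualityMap p (g ε), u ε⟫_ℂ‖ ≤ lpNorm p u * lpNorm p g ^ (p - 1) := by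
  have hpq := Real.HolderConjugate.conjExponent hp
  have hpow (ε : Fin n → Bool) : |‖g ε‖ ^ (p - 1)| ^ p.conjExponent = ‖g ε‖ ^ p := by
    rw [abs_of_nonneg (by positivity), ← Real.rpow_mul (norm_nonneg _), hpq.sub_one_mul_conj]
  have hholder :=
    Real.inner_le_Lp_mul_Lq Finset.univ (fun ε => ‖u ε‖) (fun ε => ‖g ε‖ ^ (p - 1)) hpq
  simp only [hpow, abs_norm] at hholder
  have hgp : lpNorm p g ^ (p - 1) =
      ((2 ^ n : ℝ)⁻¹ * ∑ ε, ‖g ε‖ ^ p) ^ (1 / p.conjExponent) := by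
    rw [lpNorm, ← Real.rpow_mul (by positivity)]
    congr 1
    rw [Real.conjExponent, one_div_div]
    ring
  have hmass : (2 ^ n : ℝ)⁻¹ = (2 ^ n : ℝ)⁻¹ ^ (1 / p) * (2 ^ n : ℝ)⁻¹ ^ (1 / p.conjExponent) := by
    rw [← Real.rpow_add (by positivity), one_div, one_div, hpq.inv_add_inv_eq_one, Real.rpow_one]
  calc (2 ^ n : ℝ)⁻¹ * ‖∑ ε, ⟪dualityMap p (g ε), u ε⟫_ℂ‖
      ≤ (2 ^ n : ℝ)⁻¹ * ∑ ε, ‖u ε‖ * ‖g ε‖ ^ (p - 1) := by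
        gcongr
        refine norm_sum_le_of_le _ fun ε _ => ?_
        rw [mul_comm, ← norm_dualityMap hp.ne']
        exact norm_inner_le_norm _ _
    _ ≤ (2 ^ n : ℝ)⁻¹ * ((∑ ε, ‖u ε‖ ^ p) ^ (1 / p) *
          (∑ ε, ‖g ε‖ ^ p) ^ (1 / p.conjExponent)) := by gcongr
    _ = lpNorm p u * lpNorm p g ^ (p - 1) := by
        rw [hgp, lpNorm, Real.mul_rpow (by positivity) (by positivity),
          Real.mul_rpow (by positivity) (by positivity)]
        nth_rw 1 [hmass]
        ring

lemma natDegree_sum_C_mul_X_pow_le {R ι : Type*} [Semiring R] {s : Finset ι} {c : ι → R}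
    {k : ι → ℕ} {d : ℕ} (h : ∀ i ∈ s, d < k i → c i = 0) :
    (∑ i ∈ s, Polynomial.C (c i) * Polynomial.X ^ k i).natDegree ≤ d := by
  refine Polynomial.natDegree_sum_le_of_forall_le _ _ fun i hi => ?_
  rcases le_or_gt (k i) d with hk | hk
  · exact (Polynomial.natDegree_C_mul_X_pow_le _ _).trans hk
  · simp [h i hi hk]

lemma exists_natDegree_le_eval_eq_sum_inner_noise {d : ℕ} {g : (Fin n → Bool) → H}
    (hg : degLE g d) (v : (Fin n → Bool) → H) (ρ : ℂ) :
    ∃ Q : Polynomial ℂ, Q.natDegree ≤ d ∧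
      ∀ w, Q.eval w = ∑ ε, ⟪v ε, noise (ρ * w) g ε⟫_ℂ := by
  refine ⟨∑ A : Finset (Fin n), Polynomial.C
    (∑ ε, ρ ^ A.card * ⟪v ε, walsh A ε • coeff g A⟫_ℂ) * Polynomial.X ^ A.card,
    natDegree_sum_C_mul_X_pow_le fun A _ hA => by simp [hg A hA], fun w => ?_⟩
  simp only [noise, inner_sum, inner_smul_right, Polynomial.eval_finsetSum, Polynomial.eval_mul,
    Polynomial.eval_C, Polynomial.eval_pow, Polynomial.eval_X, Finset.sum_mul]
  rw [Finset.sum_comm]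
  exact Finset.sum_congr rfl fun ε _ => Finset.sum_congr rfl fun A _ => by ring

lemma neg_mul_I_cpow_mem_dualitySector {α : ℝ} (hα : α ≠ 0)
    (hcos : (2 - p) / p ≤ -Real.cos (Real.pi * α / 2)) (y : ℝ) :
    -(y * Complex.I : ℂ) ^ (α : ℂ) ∈ dualitySector p := by
  change (2 - p) / p * ‖-(y * Complex.I : ℂ) ^ (α : ℂ)‖ ≤ (-(y * Complex.I : ℂ) ^ (α : ℂ)).re
  rw [norm_neg, Complex.neg_re, mul_I_cpow_re hα, mul_comm, ← mul_neg]
  gcongr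

lemma lpNorm_mul_pow_le_lpNorm_noise (hp1 : 1 < p) (hp2 : p ≤ 2) {α : ℝ} (hα : 0 < α)
    (hα4 : α < 4) (hcos : (2 - p) / p ≤ -Real.cos (Real.pi * α / 2)) {d : ℕ}
    {g : (Fin n → Bool) → H} (hg : degLE g d) {W : ℝ} (hW0 : 0 ≤ W) (hW1 : W < 1) :
    lpNorm p g * ((1 - W) / (1 + W)) ^ d ≤ lpNorm p (noise (1 - W ^ α : ℝ) g) := by
  let ρ : ℂ := (1 - W ^ α : ℝ)
  obtain ⟨Q, hQd, hQ⟩ :=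
    exists_natDegree_le_eval_eq_sum_inner_noise hg (fun ε => dualityMap p (g ε)) ρ
  have haxis (y : ℝ) : ‖Q.eval (1 - (y * Complex.I : ℂ) ^ (α : ℂ))⁻¹‖ ≤
      2 ^ n * (lpNorm p (noise ρ g) * lpNorm p g ^ (p - 1)) := by
    rw [hQ, ← inv_mul_le_iff₀ (by positivity)]
    refine (norm_sum_inner_dualityMap_le hp1 g _).trans ?_
    gcongr
    · exact Real.rpow_nonneg (lpNorm_nonneg p g) _
    · rw [sub_eq_add_neg]
      exact lpNorm_noise_mul_inv_le hp1 hp2 (neg_mul_I_cpow_mem_dualitySector hα.ne' hcos y) ρ g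
  have hρ : ρ ≠ 0 :=
    Complex.ofReal_ne_zero.2 (sub_pos.2 (Real.rpow_lt_one hW0 hW1 hα)).ne'
  have hpairing : ‖Q.eval (1 - (W : ℂ) ^ (α : ℂ))⁻¹‖ = 2 ^ n * lpNorm p g ^ p := by
    have hρW : 1 - (W : ℂ) ^ (α : ℂ) = ρ := by simp [ρ, Complex.ofReal_cpow hW0]
    rw [hρW, hQ, mul_inv_cancel₀ hρ, noise_one, sum_inner_dualityMap_self (by linarith),
      Complex.norm_of_nonneg (mul_nonneg (by positivity) (Real.rpow_nonneg (lpNorm_nonneg p g) p))]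
  have hratio : ‖((W : ℂ) - 1) / (W + 1)‖ = (1 - W) / (1 + W) := by
    rw [norm_div, ← Complex.ofReal_one, ← Complex.ofReal_sub, ← Complex.ofReal_add,
      Complex.norm_real, Complex.norm_of_nonneg (by positivity), Real.norm_of_nonpos (by linarith),
      neg_sub, add_comm]
  have hkey := norm_eval_inv_one_sub_cpow_mul_pow_le hQd hα hα4 haxis (z := W) (by simpa)
    (by exact_mod_cast hW1.ne)
  rw [hpairing, hratio, mul_assoc, mul_le_mul_iff_right₀ (by positivity)] at hkey
  rcases (lpNorm_nonneg p g).eq_or_lt with h0 | hpos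
  · rw [← h0, zero_mul]
    exact lpNorm_nonneg p _
  · refine le_of_mul_le_mul_right ?_ (Real.rpow_pos_of_pos hpos (p - 1))
    calc lpNorm p g * ((1 - W) / (1 + W)) ^ d * lpNorm p g ^ (p - 1)
        = lpNorm p g ^ p * ((1 - W) / (1 + W)) ^ d := by
          rw [Real.rpow_sub_one hpos.ne']
          field_simp
      _ ≤ lpNorm p (noise ρ g) * lpNorm p g ^ (p - 1) := hkey

end ReverseContraction

section ScalarEstimates

variable {n d : ℕ}

lemma exists_natDegree_le_eval_eq_multilinearExt {f : (Fin n → Bool) → ℂ} (hf : degLE f d)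
    (S : Finset (Fin n)) (ρ : ℝ) (x : Fin n → Bool) :
    ∃ q : Polynomial ℂ, q.natDegree ≤ d ∧
      (∀ s : ℝ, q.eval (s : ℂ) =
        multilinearExt f fun i => (if i ∈ S then s else ρ) * sgn (x i)) ∧
      ρ * q.derivative.eval (ρ : ℂ) = ∑ i ∈ S, pderiv i (noise ρ f) x := by
  refine ⟨∑ B : Finset (Fin n), Polynomial.C ((ρ : ℂ) ^ (B \ S).card * (walsh B x * coeff f B)) *
    Polynomial.X ^ (B ∩ S).card, natDegree_sum_C_mul_X_pow_le fun B _ hB => ?_, fun s => ?_, ?_⟩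
  · rw [hf B (hB.trans_le (Finset.card_le_card Finset.inter_subset_left)), mul_zero, mul_zero]
  · simp only [Polynomial.eval_finsetSum, Polynomial.eval_mul, Polynomial.eval_C,
      Polynomial.eval_pow, Polynomial.eval_X, multilinearExt]
    refine Finset.sum_congr rfl fun B _ => ?_
    rw [Finset.prod_mul_distrib, Finset.prod_ite, Finset.prod_const, Finset.prod_const,
      Finset.filter_mem_eq_inter, Finset.filter_notMem_eq_sdiff, walsh, Complex.real_smul]
    push_cast
    ring
  · rw [sum_pderiv_noise]
    simp only [Polynomial.derivative_sum, Polynomial.eval_finsetSum,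
      Polynomial.derivative_C_mul_X_pow, Polynomial.eval_mul, Polynomial.eval_C,
      Polynomial.eval_pow, Polynomial.eval_X, Finset.mul_sum]
    refine Finset.sum_congr rfl fun B _ => ?_
    rw [← Finset.card_inter_add_card_sdiff B S, nsmul_eq_mul, smul_eq_mul, Complex.real_smul]
    rcases (B ∩ S).card with _ | k
    · simp
    · rw [Nat.add_sub_cancel]
      ring

lemma norm_sum_pderiv_noise_mul_sqrt_le {f : (Fin n → Bool) → ℂ} (hf : degLE f d) {ρ : ℝ}
    (hρ : |ρ| ≤ 1) (x : Fin n → Bool) (S : Finset (Fin n)) :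
    ‖∑ i ∈ S, pderiv i (noise ρ f) x‖ * √(1 - ρ ^ 2) ≤ Real.exp 1 * d * linfNorm f := by
  obtain ⟨q, hqd, hq, hq'⟩ := exists_natDegree_le_eval_eq_multilinearExt hf S ρ x
  have hbound (s : ℝ) (hs : |s| ≤ 1) : ‖q.eval (s : ℂ)‖ ≤ linfNorm f := by
    rw [hq]
    refine norm_multilinearExt_le f fun i => ?_
    rw [abs_mul, abs_sgn, mul_one]
    split_ifs <;> assumption
  rw [← hq', norm_mul, Complex.norm_real, mul_assoc]
  exact (mul_le_of_le_one_left (by positivity) hρ).trans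
    (norm_eval_derivative_mul_sqrt_le hqd hbound hρ)

lemma sum_abs_le_two_mul {ι : Type*} [Fintype ι] {a : ι → ℝ} {M : ℝ}
    (h : ∀ S : Finset ι, |∑ i ∈ S, a i| ≤ M) : ∑ i, |a i| ≤ 2 * M := by
  classical
  have hpos : ∑ i with 0 ≤ a i, |a i| = ∑ i with 0 ≤ a i, a i :=
    Finset.sum_congr rfl fun i hi => abs_of_nonneg (Finset.mem_filter.1 hi).2
  have hneg : ∑ i with ¬0 ≤ a i, |a i| = -∑ i with ¬0 ≤ a i, a i := by
    rw [← Finset.sum_neg_distrib]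
    exact Finset.sum_congr rfl fun i hi => abs_of_neg (not_le.1 (Finset.mem_filter.1 hi).2)
  rw [← Finset.sum_filter_add_sum_filter_not Finset.univ (fun i => 0 ≤ a i), hpos, hneg, two_mul]
  exact add_le_add ((le_abs_self _).trans (h _)) ((neg_le_abs _).trans (h _))

lemma sum_norm_le_four_mul {ι : Type*} [Fintype ι] {a : ι → ℂ} {M : ℝ}
    (h : ∀ S : Finset ι, ‖∑ i ∈ S, a i‖ ≤ M) : ∑ i, ‖a i‖ ≤ 4 * M := by
  have hre : ∑ i, |(a i).re| ≤ 2 * M := sum_abs_le_two_mul fun S => by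
    rw [← Complex.re_sum]
    exact (Complex.abs_re_le_norm _).trans (h S)
  have him : ∑ i, |(a i).im| ≤ 2 * M := sum_abs_le_two_mul fun S => by
    rw [← Complex.im_sum]
    exact (Complex.abs_im_le_norm _).trans (h S)
  calc ∑ i, ‖a i‖ ≤ ∑ i, (|(a i).re| + |(a i).im|) :=
        Finset.sum_le_sum fun i _ => Complex.norm_le_abs_re_add_abs_im _
    _ ≤ 4 * M := by
        rw [Finset.sum_add_distrib]
        linarith

lemma sum_norm_pderiv_noise_le {f : (Fin n → Bool) → ℂ} (hf : degLE f d) {ρ : ℝ} (hρ : |ρ| < 1)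
    (x : Fin n → Bool) :
    ∑ i, ‖pderiv i (noise ρ f) x‖ ≤ 4 * (Real.exp 1 * d * linfNorm f / √(1 - ρ ^ 2)) := by
  have hsqrt : 0 < √(1 - ρ ^ 2) := Real.sqrt_pos.2 (sub_pos.2 ((sq_lt_one_iff_abs_lt_one ρ).2 hρ))
  refine sum_norm_le_four_mul fun S => ?_
  rw [le_div_iff₀ hsqrt]
  exact norm_sum_pderiv_noise_mul_sqrt_le hf hρ.le x S

lemma norm_pderiv_le_linfNorm (i : Fin n) (f : (Fin n → Bool) → X) (ε : Fin n → Bool) :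
    ‖pderiv i f ε‖ ≤ linfNorm f := by
  change ‖(2 : ℝ)⁻¹ • (f ε - f (flipCoord i ε))‖ ≤ _
  rw [norm_smul, Real.norm_of_nonneg (by positivity), inv_mul_le_iff₀ two_pos, two_mul]
  exact norm_sub_le_of_le (norm_le_linfNorm f ε) (norm_le_linfNorm f _)

lemma linfNorm_noise_le (f : (Fin n → Bool) → X) {ρ : ℝ} (hρ : |ρ| ≤ 1) :
    linfNorm (noise ρ f) ≤ linfNorm f :=
  ciSup_le fun ε => by
    rw [noise_ofReal]
    exact norm_multilinearExt_le f fun i => by rwa [abs_mul, abs_sgn, mul_one]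

lemma sum_lpNorm_rpow_le {ι Y : Type*} [Fintype ι] [NormedAddCommGroup Y] {p K : ℝ} (hp : p ≠ 0)
    {g : ι → (Fin n → Bool) → Y} (h : ∀ ε, ∑ i, ‖g i ε‖ ^ p ≤ K) :
    ∑ i, lpNorm p (g i) ^ p ≤ K := by
  simp only [lpNorm_rpow hp]
  rw [← Finset.mul_sum, Finset.sum_comm, inv_mul_le_iff₀ (by positivity)]
  simpa using Finset.sum_le_card_nsmul Finset.univ _ K fun ε _ => h ε

lemma sum_lpNorm_pderiv_noise_rpow_le {p : ℝ} (hp : 1 ≤ p) {f : (Fin n → Bool) → ℂ}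
    (hf : degLE f d) {ρ : ℝ} (hρ : |ρ| < 1) :
    ∑ i, lpNorm p (pderiv i (noise ρ f)) ^ p ≤
      4 * Real.exp 1 * (d / √(1 - ρ ^ 2)) * linfNorm f ^ p := by
  have hp0 : p - 1 + 1 ≠ 0 := by linarith
  refine sum_lpNorm_rpow_le (by linarith) fun x => ?_
  calc ∑ i, ‖pderiv i (noise ρ f) x‖ ^ p
      ≤ ∑ i, linfNorm f ^ (p - 1) * ‖pderiv i (noise ρ f) x‖ := by
        refine Finset.sum_le_sum fun i _ => ?_
        rw [← sub_add_cancel p 1, Real.rpow_add_one' (norm_nonneg _) hp0, sub_add_cancel]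
        gcongr
        exact (norm_pderiv_le_linfNorm i _ x).trans (linfNorm_noise_le f hρ.le)
    _ ≤ linfNorm f ^ (p - 1) * (4 * (Real.exp 1 * d * linfNorm f / √(1 - ρ ^ 2))) := by
        rw [← Finset.mul_sum]
        exact mul_le_mul_of_nonneg_left (sum_norm_pderiv_noise_le hf hρ x)
          (Real.rpow_nonneg (linfNorm_nonneg f) _)
    _ = 4 * Real.exp 1 * (d / √(1 - ρ ^ 2)) * (linfNorm f ^ (p - 1) * linfNorm f) := by ring
    _ = 4 * Real.exp 1 * (d / √(1 - ρ ^ 2)) * linfNorm f ^ p := by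
        rw [← Real.rpow_add_one' (linfNorm_nonneg f) hp0, sub_add_cancel]

end ScalarEstimates

section Influence

variable {p : ℝ}

lemma exp_neg_two_le_div_pow {d : ℕ} (hd : 1 ≤ d) :
    Real.exp (-2) ≤ ((1 - 1 / (2 * (d : ℝ))) / (1 + 1 / (2 * (d : ℝ)))) ^ d := by
  have hd1 : (1 : ℝ) ≤ d := by exact_mod_cast hd
  have hbase : Real.exp (-(2 / d)) ≤ (1 - 1 / (2 * (d : ℝ))) / (1 + 1 / (2 * (d : ℝ))) := by
    have hdiv : (1 - 1 / (2 * (d : ℝ))) / (1 + 1 / (2 * (d : ℝ))) = (2 * d - 1) / (2 * d + 1) := by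
      field_simp
    rw [hdiv, Real.exp_neg, inv_le_comm₀ (Real.exp_pos _) (div_pos (by linarith) (by positivity)),
      inv_div]
    refine le_trans ?_ (Real.add_one_le_exp _)
    rw [div_le_iff₀ (by linarith)]
    have : (2 / d + 1) * (2 * d - 1) = 2 * (d : ℝ) + 1 + 2 * (1 - 1 / d) := by
      field_simp
      ring
    linarith [(div_le_one (by linarith)).2 hd1]
  calc Real.exp (-2) = Real.exp (-(2 / d)) ^ d := by
        rw [← Real.exp_nat_mul]
        congr 1
        field_simp
    _ ≤ _ := by gcongr

lemma div_sqrt_one_sub_sq_le {x α : ℝ} (hx : 1 ≤ x) (hα0 : 0 ≤ α) (hα2 : α ≤ 2) :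
    x / √(1 - (1 - (1 / (2 * x)) ^ α) ^ 2) ≤ 2 * x ^ (1 + α / 2) := by
  have hW : 0 < 1 / (2 * x) := by positivity
  have hWα : (1 / (2 * x)) ^ α ≤ 1 :=
    Real.rpow_le_one hW.le ((div_le_one (by positivity)).2 (by linarith)) hα0
  have hsqrt : (1 / (2 * x)) ^ (α / 2) ≤ √(1 - (1 - (1 / (2 * x)) ^ α) ^ 2) := by
    refine Real.le_sqrt_of_sq_le ?_
    rw [← Real.rpow_mul_natCast hW.le, Nat.cast_two, div_mul_cancel₀ _ two_ne_zero]
    linarith [mul_nonneg (Real.rpow_nonneg hW.le α) (sub_nonneg.2 hWα)]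
  calc x / √(1 - (1 - (1 / (2 * x)) ^ α) ^ 2) ≤ x / (1 / (2 * x)) ^ (α / 2) := by gcongr
    _ = 2 ^ (α / 2) * x ^ (1 + α / 2) := by
        rw [one_div, Real.inv_rpow (by positivity), div_inv_eq_mul,
          Real.mul_rpow (by norm_num) (by positivity), Real.rpow_one_add' (by positivity)
          (by positivity)]
        ring
    _ ≤ 2 * x ^ (1 + α / 2) := by
        gcongr
        exact Real.rpow_le_self_of_one_le one_le_two (by linarith)

lemma sum_lpNorm_pderiv_rpow_le_of_le_neg_cos (hp1 : 1 < p) (hp2 : p ≤ 2) {α : ℝ} (hα0 : 0 < α)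
    (hα2 : α ≤ 2) (hcos : (2 - p) / p ≤ -Real.cos (Real.pi * α / 2)) {n d : ℕ} (hd : 1 ≤ d)
    {f : (Fin n → Bool) → ℂ} (hf : degLE f d) :
    ∑ i, lpNorm p (pderiv i f) ^ p ≤
      8 * Real.exp (2 * p + 1) * (d : ℝ) ^ (1 + α / 2) * linfNorm f ^ p := by
  have hd1 : (1 : ℝ) ≤ d := by exact_mod_cast hd
  let W : ℝ := 1 / (2 * d)
  have hW0 : 0 < W := by positivity
  have hW1 : W < 1 := (div_lt_one (by positivity)).2 (by linarith)
  have hWα0 : 0 < W ^ α := Real.rpow_pos_of_pos hW0 α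
  have hWα1 : W ^ α < 1 := Real.rpow_lt_one hW0.le hW1 hα0
  let ρ : ℝ := 1 - W ^ α
  have hρ : |ρ| < 1 := abs_lt.2 ⟨by linarith, by linarith⟩
  have hreverse (i : Fin n) : lpNorm p (pderiv i f) ^ p ≤
      Real.exp (2 * p) * lpNorm p (pderiv i (noise ρ f)) ^ p := by
    have hle : lpNorm p (pderiv i f) * Real.exp (-2) ≤ lpNorm p (pderiv i (noise ρ f)) := by
      rw [← noise_pderiv]
      exact (mul_le_mul_of_nonneg_left (exp_neg_two_le_div_pow hd) (lpNorm_nonneg p _)).trans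
        (lpNorm_mul_pow_le_lpNorm_noise hp1 hp2 hα0 (by linarith) hcos (degLE_pderiv hf i)
          hW0.le hW1)
    rw [Real.exp_neg, ← div_eq_mul_inv, div_le_iff₀' (Real.exp_pos 2)] at hle
    rw [Real.exp_mul, ← Real.mul_rpow (Real.exp_pos 2).le (lpNorm_nonneg p _)]
    exact Real.rpow_le_rpow (lpNorm_nonneg p _) hle (by linarith)
  have hMp : 0 ≤ linfNorm f ^ p := Real.rpow_nonneg (linfNorm_nonneg f) p
  calc ∑ i, lpNorm p (pderiv i f) ^ p
      ≤ Real.exp (2 * p) * ∑ i, lpNorm p (pderiv i (noise ρ f)) ^ p := by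
        rw [Finset.mul_sum]
        exact Finset.sum_le_sum fun i _ => hreverse i
    _ ≤ Real.exp (2 * p) * (4 * Real.exp 1 * (2 * (d : ℝ) ^ (1 + α / 2)) * linfNorm f ^ p) := by
        gcongr
        refine (sum_lpNorm_pderiv_noise_rpow_le hp1.le hf hρ).trans ?_
        gcongr
        exact div_sqrt_one_sub_sq_le hd1 hα0.le hα2
    _ = 8 * Real.exp (2 * p + 1) * (d : ℝ) ^ (1 + α / 2) * linfNorm f ^ p := by
        rw [Real.exp_add]
        ring

lemma cos_arcsin_two_mul_sqrt_sub_one_div (hp1 : 1 ≤ p) (hp2 : p ≤ 2) :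
    Real.cos (Real.arcsin (2 * √(p - 1) / p)) = (2 - p) / p := by
  have hsq : 1 - (2 * √(p - 1) / p) ^ 2 = ((2 - p) / p) ^ 2 := by
    rw [div_pow, mul_pow, Real.sq_sqrt (by linarith)]
    field_simp
    ring
  rw [Real.cos_arcsin, hsq, Real.sqrt_sq (div_nonneg (by linarith) (by linarith))]

theorem stmt15_general (hp1 : 1 < p) (hp2 : p ≤ 2) {n d : ℕ} (hd : 1 ≤ d)
    {f : (Fin n → Bool) → ℂ} (hf : degLE f d) :
    ∑ i, lpNorm p (pderiv i f) ^ p ≤ 8 * Real.exp (2 * p + 1) *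
      (d : ℝ) ^ (2 - (1 / Real.pi) * Real.arcsin (2 * √(p - 1) / p)) * linfNorm f ^ p := by
  let θ := Real.arcsin (2 * √(p - 1) / p)
  have hθ0 : 0 ≤ θ := Real.arcsin_nonneg.2 (by positivity)
  have hθ : θ / Real.pi ≤ 1 / 2 := by
    rw [div_le_iff₀ Real.pi_pos]
    linarith [Real.arcsin_le_pi_div_two (2 * √(p - 1) / p)]
  let α := 2 - 2 * (θ / Real.pi)
  have hangle : Real.pi * α / 2 = Real.pi - θ := by
    simp only [α]
    field_simp
  have hcos : (2 - p) / p ≤ -Real.cos (Real.pi * α / 2) := by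
    rw [hangle, Real.cos_pi_sub, neg_neg, cos_arcsin_two_mul_sqrt_sub_one_div hp1.le hp2]
  have hα0 : 0 < α := by simp only [α]; linarith
  have hα2 : α ≤ 2 := sub_le_self 2 (mul_nonneg zero_le_two (div_nonneg hθ0 Real.pi_pos.le))
  convert sum_lpNorm_pderiv_rpow_le_of_le_neg_cos hp1 hp2 hα0 hα2 hcos hd hf using 4
  simp only [α, θ]
  ring

end Influence

/-- **Improved bound on the `ℓ_p` sum of influences of bounded low-degree functions.** -/
theorem stmt15 (p : ℝ) (hp1 : 1 < p) (hp2 : p < 4 / 3) :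
    ∃ K : ℝ, 0 < K ∧
      ∀ n d : ℕ, 1 ≤ d → d ≤ n → ∀ f : (Fin n → Bool) → ℂ, degLE f d →
        ∑ i : Fin n, (lpNorm p (pderiv i f)) ^ p ≤
          K * (d : ℝ) ^ (2 - (1 / Real.pi) * Real.arcsin (2 * Real.sqrt (p - 1) / p)) *
            (linfNorm f) ^ p :=
  ⟨8 * Real.exp (2 * p + 1), by positivity,
    fun _ _ hd _ _ hf => stmt15_general hp1 (by linarith) hd hf⟩

end HammingCube
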